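/- arXiv:math/0311215 — 2 statements merged into one kernel-verified Lean document; each statement's English description precedes it below -/
import Mathlib

section
/- In the Monge chart, the first partial derivatives of the components of the mean curvature vector at the origin are ∂H₁/∂u(0,0) = (a₁ + b₁)/2, ∂H₁/∂v(0,0) = (c₁ + d₁)/2, ∂H₂/∂u(0,0) = (a₂ + b₂)/2, ∂H₂/∂v(0,0) = (c₂ + d₂)/2. -/
/-!
Since `αᵤᵤ`, `αᵤᵥ`, `αᵥᵥ` have vanishing first two components, `e_i`, `f_i`, `g_i` are combinations
of the second derivatives of `h₁`, `h₂` with the last two components of `N_i` as coefficients. These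
components, as well as `E`, `F`, `G`, are even functions of the gradients `∇h₁`, `∇h₂`, so they are
stationary at the origin (`FlatAt`), where the gradients vanish. Hence to first order
`H_i = (∂²h_i/∂u² + ∂²h_i/∂v²) / 2` (`hasFDerivAt_mean`), and the claim follows from the symmetry of the
mixed partial derivatives (`pd_comm`).
-/

noncomputable section

open scoped RealInnerProductSpace

abbrev E4 : Type := EuclideanSpace ℝ (Fin 4)

/-- Partial derivative with respect to the first variable `u`. -/
def pdu {X : Type*} [NormedAddCommGroup X] [NormedSpace ℝ X]
    (f : ℝ × ℝ → X) (p : ℝ × ℝ) : X := fderiv ℝ f p (1, 0)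

/-- Partial derivative with respect to the second variable `v`. -/
def pdv {X : Type*} [NormedAddCommGroup X] [NormedSpace ℝ X]
    (f : ℝ × ℝ → X) (p : ℝ × ℝ) : X := fderiv ℝ f p (0, 1)

/-- The wedge `x ∧ y ∧ z` of three vectors of `ℝ⁴`: the unique vector satisfying
`⟪x ∧ y ∧ z, w⟫ = det (x, y, z, w)` for all `w ∈ ℝ⁴`. -/
def wedge (x y z : E4) : E4 :=
  (WithLp.equiv 2 (Fin 4 → ℝ)).symm fun i =>
    Matrix.det (Matrix.of ![(x : Fin 4 → ℝ), y, z, fun j => if j = i then 1 else 0])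

namespace Monge

/-- The immersion `α (u,v) = (u, v, h₁(u,v), h₂(u,v))` in the Monge chart. -/
def α (h₁ h₂ : ℝ × ℝ → ℝ) (p : ℝ × ℝ) : E4 :=
  (WithLp.equiv 2 (Fin 4 → ℝ)).symm ![p.1, p.2, h₁ p, h₂ p]

def αu (h₁ h₂ : ℝ × ℝ → ℝ) : ℝ × ℝ → E4 := pdu (α h₁ h₂)
def αv (h₁ h₂ : ℝ × ℝ → ℝ) : ℝ × ℝ → E4 := pdv (α h₁ h₂)
def αuu (h₁ h₂ : ℝ × ℝ → ℝ) : ℝ × ℝ → E4 := pdu (αu h₁ h₂)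
def αuv (h₁ h₂ : ℝ × ℝ → ℝ) : ℝ × ℝ → E4 := pdv (αu h₁ h₂)
def αvv (h₁ h₂ : ℝ × ℝ → ℝ) : ℝ × ℝ → E4 := pdv (αv h₁ h₂)

/-- `B₁ = (−∂h₁/∂u, −∂h₁/∂v, 1, 0)`. -/
def B1 (h₁ : ℝ × ℝ → ℝ) (p : ℝ × ℝ) : E4 :=
  (WithLp.equiv 2 (Fin 4 → ℝ)).symm ![-(pdu h₁ p), -(pdv h₁ p), 1, 0]

/-- `B₂ = α_u ∧ α_v ∧ B₁`. -/
def B2 (h₁ h₂ : ℝ × ℝ → ℝ) (p : ℝ × ℝ) : E4 :=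
  wedge (αu h₁ h₂ p) (αv h₁ h₂ p) (B1 h₁ p)

/-- `N₁ = B₁/|B₁|`. -/
def N1 (h₁ : ℝ × ℝ → ℝ) (p : ℝ × ℝ) : E4 := ‖B1 h₁ p‖⁻¹ • B1 h₁ p

/-- `N₂ = B₂/|B₂|`. -/
def N2 (h₁ h₂ : ℝ × ℝ → ℝ) (p : ℝ × ℝ) : E4 := ‖B2 h₁ h₂ p‖⁻¹ • B2 h₁ h₂ p

/-- Coefficient `E` of the first fundamental form. -/
def Ec (h₁ h₂ : ℝ × ℝ → ℝ) (p : ℝ × ℝ) : ℝ := ⟪αu h₁ h₂ p, αu h₁ h₂ p⟫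
/-- Coefficient `F` of the first fundamental form. -/
def Fc (h₁ h₂ : ℝ × ℝ → ℝ) (p : ℝ × ℝ) : ℝ := ⟪αu h₁ h₂ p, αv h₁ h₂ p⟫
/-- Coefficient `G` of the first fundamental form. -/
def Gc (h₁ h₂ : ℝ × ℝ → ℝ) (p : ℝ × ℝ) : ℝ := ⟪αv h₁ h₂ p, αv h₁ h₂ p⟫

def e1 (h₁ h₂ : ℝ × ℝ → ℝ) (p : ℝ × ℝ) : ℝ := ⟪αuu h₁ h₂ p, N1 h₁ p⟫
def f1 (h₁ h₂ : ℝ × ℝ → ℝ) (p : ℝ × ℝ) : ℝ := ⟪αuv h₁ h₂ p, N1 h₁ p⟫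
def g1 (h₁ h₂ : ℝ × ℝ → ℝ) (p : ℝ × ℝ) : ℝ := ⟪αvv h₁ h₂ p, N1 h₁ p⟫
def e2 (h₁ h₂ : ℝ × ℝ → ℝ) (p : ℝ × ℝ) : ℝ := ⟪αuu h₁ h₂ p, N2 h₁ h₂ p⟫
def f2 (h₁ h₂ : ℝ × ℝ → ℝ) (p : ℝ × ℝ) : ℝ := ⟪αuv h₁ h₂ p, N2 h₁ h₂ p⟫
def g2 (h₁ h₂ : ℝ × ℝ → ℝ) (p : ℝ × ℝ) : ℝ := ⟪αvv h₁ h₂ p, N2 h₁ h₂ p⟫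

/-- First component `H₁ = (G e₁ − 2F f₁ + E g₁)/(2(EG − F²))` of the mean curvature vector. -/
def Hc1 (h₁ h₂ : ℝ × ℝ → ℝ) (p : ℝ × ℝ) : ℝ :=
  (Gc h₁ h₂ p * e1 h₁ h₂ p - 2 * Fc h₁ h₂ p * f1 h₁ h₂ p + Ec h₁ h₂ p * g1 h₁ h₂ p) /
    (2 * (Ec h₁ h₂ p * Gc h₁ h₂ p - Fc h₁ h₂ p ^ 2))

/-- Second component `H₂ = (G e₂ − 2F f₂ + E g₂)/(2(EG − F²))` of the mean curvature vector. -/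
def Hc2 (h₁ h₂ : ℝ × ℝ → ℝ) (p : ℝ × ℝ) : ℝ :=
  (Gc h₁ h₂ p * e2 h₁ h₂ p - 2 * Fc h₁ h₂ p * f2 h₁ h₂ p + Ec h₁ h₂ p * g2 h₁ h₂ p) /
    (2 * (Ec h₁ h₂ p * Gc h₁ h₂ p - Fc h₁ h₂ p ^ 2))

/-- The mean curvature vector `H = H₁N₁ + H₂N₂`. -/
def Hvec (h₁ h₂ : ℝ × ℝ → ℝ) (p : ℝ × ℝ) : E4 :=
  Hc1 h₁ h₂ p • N1 h₁ p + Hc2 h₁ h₂ p • N2 h₁ h₂ p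

def eH (h₁ h₂ : ℝ × ℝ → ℝ) (p : ℝ × ℝ) : ℝ := ⟪αuu h₁ h₂ p, Hvec h₁ h₂ p⟫
def fH (h₁ h₂ : ℝ × ℝ → ℝ) (p : ℝ × ℝ) : ℝ := ⟪αuv h₁ h₂ p, Hvec h₁ h₂ p⟫
def gH (h₁ h₂ : ℝ × ℝ → ℝ) (p : ℝ × ℝ) : ℝ := ⟪αvv h₁ h₂ p, Hvec h₁ h₂ p⟫

end Monge

/-- `r = ∂²h/∂u²(0,0)`. -/
def rr (h : ℝ × ℝ → ℝ) : ℝ := pdu (pdu h) (0, 0)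
/-- `s = ∂²h/∂u∂v(0,0)`. -/
def ss (h : ℝ × ℝ → ℝ) : ℝ := pdv (pdu h) (0, 0)
/-- `t = ∂²h/∂v²(0,0)`. -/
def tt (h : ℝ × ℝ → ℝ) : ℝ := pdv (pdv h) (0, 0)
/-- `a = ∂³h/∂u³(0,0)`. -/
def aa (h : ℝ × ℝ → ℝ) : ℝ := pdu (pdu (pdu h)) (0, 0)
/-- `d = ∂³h/∂u²∂v(0,0)`. -/
def dd (h : ℝ × ℝ → ℝ) : ℝ := pdv (pdu (pdu h)) (0, 0)
/-- `b = ∂³h/∂u∂v²(0,0)`. -/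
def bb (h : ℝ × ℝ → ℝ) : ℝ := pdv (pdv (pdu h)) (0, 0)
/-- `c = ∂³h/∂v³(0,0)`. -/
def cc (h : ℝ × ℝ → ℝ) : ℝ := pdv (pdv (pdv h)) (0, 0)

open Monge

/-! ### Functions stationary at the origin -/

/-- `f` takes the value `c` at the origin and its derivative vanishes there. -/
def FlatAt (f : ℝ × ℝ → ℝ) (c : ℝ) : Prop :=
  f (0, 0) = c ∧ HasFDerivAt f (0 : ℝ × ℝ →L[ℝ] ℝ) (0, 0)

namespace FlatAt

variable {f g : ℝ × ℝ → ℝ} {c d : ℝ}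

lemma const (c : ℝ) : FlatAt (fun _ => c) c := ⟨rfl, hasFDerivAt_const _ _⟩

lemma add (hf : FlatAt f c) (hg : FlatAt g d) : FlatAt (fun p => f p + g p) (c + d) :=
  ⟨by simp [hf.1, hg.1], by simpa using hf.2.fun_add hg.2⟩

lemma neg (hf : FlatAt f c) : FlatAt (fun p => - f p) (-c) :=
  ⟨by simp [hf.1], by simpa using hf.2.fun_neg⟩

lemma mul (hf : FlatAt f c) (hg : FlatAt g d) : FlatAt (fun p => f p * g p) (c * d) :=
  ⟨by simp [hf.1, hg.1], by simpa using hf.2.fun_mul hg.2⟩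

/-- The product of two functions vanishing at the origin vanishes to second order. -/
lemma mul_of_zero (hf : DifferentiableAt ℝ f (0, 0)) (hg : DifferentiableAt ℝ g (0, 0))
    (hf0 : f (0, 0) = 0) (hg0 : g (0, 0) = 0) : FlatAt (fun p => f p * g p) 0 :=
  ⟨by simp [hf0], by simpa [hf0, hg0] using hf.hasFDerivAt.fun_mul hg.hasFDerivAt⟩

lemma inv_sqrt (hf : FlatAt f 1) : FlatAt (fun p => (√(f p))⁻¹) 1 := by
  have h0 : √(f (0, 0)) ≠ 0 := by simp [hf.1]
  refine ⟨by simp [hf.1], ?_⟩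
  have h1 := hf.2.sqrt (by simp [hf.1])
  have h2 := (hasDerivAt_inv h0).comp_hasFDerivAt (0, 0) h1
  simpa [Function.comp_def] using h2

end FlatAt

/-! ### Partial derivatives -/

section Calculus

variable {X : Type*} [NormedAddCommGroup X] [NormedSpace ℝ X]

lemma contDiff_pdu {f : ℝ × ℝ → X} (hf : ContDiff ℝ (⊤ : ℕ∞) f) :
    ContDiff ℝ (⊤ : ℕ∞) (pdu f) :=
  (hf.fderiv_right (by simp)).clm_apply contDiff_const

lemma contDiff_pdv {f : ℝ × ℝ → X} (hf : ContDiff ℝ (⊤ : ℕ∞) f) :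
    ContDiff ℝ (⊤ : ℕ∞) (pdv f) :=
  (hf.fderiv_right (by simp)).clm_apply contDiff_const

lemma diff_of_contDiff {f : ℝ × ℝ → X} (hf : ContDiff ℝ (⊤ : ℕ∞) f) : Differentiable ℝ f :=
  hf.differentiable (by simp)

/-- Symmetry of second derivatives. -/
lemma pd_comm {f : ℝ × ℝ → X} (hf : ContDiff ℝ (⊤ : ℕ∞) f) : pdu (pdv f) = pdv (pdu f) := by
  funext p
  have hd : DifferentiableAt ℝ (fderiv ℝ f) p :=
    (hf.fderiv_right (m := (⊤ : ℕ∞)) (by simp)).differentiable (by simp) p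
  have hs : IsSymmSndFDerivAt ℝ f p :=
    hf.contDiffAt.isSymmSndFDerivAt (by
      rw [minSmoothness_of_isRCLikeNormedField]; exact WithTop.coe_le_coe.2 (le_top : (2 : ℕ∞) ≤ ⊤))
  have key (w w' : ℝ × ℝ) :
      fderiv ℝ (fun q => fderiv ℝ f q w) p w' = fderiv ℝ (fderiv ℝ f) p w' w := by
    rw [(hd.hasFDerivAt.clm_apply (hasFDerivAt_const w p)).fderiv]
    simp
  change fderiv ℝ (fun q => fderiv ℝ f q (0, 1)) p (1, 0)
    = fderiv ℝ (fun q => fderiv ℝ f q (1, 0)) p (0, 1)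
  rw [key, key]
  exact hs _ _

/-- A directional derivative of a map into `ℝ⁴` is computed componentwise. -/
lemma fderiv_vec {a b c d : ℝ × ℝ → ℝ} {p : ℝ × ℝ} (w : ℝ × ℝ)
    (ha : DifferentiableAt ℝ a p) (hb : DifferentiableAt ℝ b p)
    (hc : DifferentiableAt ℝ c p) (hd : DifferentiableAt ℝ d p) :
    fderiv ℝ (fun q => ((WithLp.equiv 2 (Fin 4 → ℝ)).symm ![a q, b q, c q, d q] : E4)) p w =
      (WithLp.equiv 2 (Fin 4 → ℝ)).symm
        ![fderiv ℝ a p w, fderiv ℝ b p w, fderiv ℝ c p w, fderiv ℝ d p w] := by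
  have hdiff : DifferentiableAt ℝ
      (fun q => ((WithLp.equiv 2 (Fin 4 → ℝ)).symm ![a q, b q, c q, d q] : E4)) p := by
    rw [differentiableAt_euclidean]
    intro i
    fin_cases i <;> simpa
  have hcomp (i : Fin 4) := ((EuclideanSpace.proj (𝕜 := ℝ) i).hasFDerivAt.comp p
    hdiff.hasFDerivAt).fderiv
  ext i
  have h := DFunLike.congr_fun (hcomp i) w
  fin_cases i <;> exact h.symm

end Calculus

/-! ### The Monge chart in coordinates -/

section Chart

variable {h₁ h₂ : ℝ × ℝ → ℝ}

lemma αu_eq (H₁ : ContDiff ℝ (⊤ : ℕ∞) h₁) (H₂ : ContDiff ℝ (⊤ : ℕ∞) h₂) :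
    αu h₁ h₂ = fun p => (WithLp.equiv 2 (Fin 4 → ℝ)).symm ![1, 0, pdu h₁ p, pdu h₂ p] := by
  funext p
  refine (fderiv_vec (1, 0) differentiableAt_fst differentiableAt_snd
    (diff_of_contDiff H₁ p) (diff_of_contDiff H₂ p)).trans ?_
  simp [pdu, fderiv_fst, fderiv_snd]

lemma αv_eq (H₁ : ContDiff ℝ (⊤ : ℕ∞) h₁) (H₂ : ContDiff ℝ (⊤ : ℕ∞) h₂) :
    αv h₁ h₂ = fun p => (WithLp.equiv 2 (Fin 4 → ℝ)).symm ![0, 1, pdv h₁ p, pdv h₂ p] := by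
  funext p
  refine (fderiv_vec (0, 1) differentiableAt_fst differentiableAt_snd
    (diff_of_contDiff H₁ p) (diff_of_contDiff H₂ p)).trans ?_
  simp [pdv, fderiv_fst, fderiv_snd]

lemma αuu_eq (H₁ : ContDiff ℝ (⊤ : ℕ∞) h₁) (H₂ : ContDiff ℝ (⊤ : ℕ∞) h₂) :
    αuu h₁ h₂ = fun p =>
      (WithLp.equiv 2 (Fin 4 → ℝ)).symm ![0, 0, pdu (pdu h₁) p, pdu (pdu h₂) p] := by
  funext p
  rw [αuu, αu_eq H₁ H₂]
  refine (fderiv_vec (1, 0) (differentiableAt_const _) (differentiableAt_const _)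
    (diff_of_contDiff (contDiff_pdu H₁) p) (diff_of_contDiff (contDiff_pdu H₂) p)).trans ?_
  simp [pdu]

lemma αuv_eq (H₁ : ContDiff ℝ (⊤ : ℕ∞) h₁) (H₂ : ContDiff ℝ (⊤ : ℕ∞) h₂) :
    αuv h₁ h₂ = fun p =>
      (WithLp.equiv 2 (Fin 4 → ℝ)).symm ![0, 0, pdv (pdu h₁) p, pdv (pdu h₂) p] := by
  funext p
  rw [αuv, αu_eq H₁ H₂]
  refine (fderiv_vec (0, 1) (differentiableAt_const _) (differentiableAt_const _)
    (diff_of_contDiff (contDiff_pdu H₁) p) (diff_of_contDiff (contDiff_pdu H₂) p)).trans ?_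
  simp [pdv]

lemma αvv_eq (H₁ : ContDiff ℝ (⊤ : ℕ∞) h₁) (H₂ : ContDiff ℝ (⊤ : ℕ∞) h₂) :
    αvv h₁ h₂ = fun p =>
      (WithLp.equiv 2 (Fin 4 → ℝ)).symm ![0, 0, pdv (pdv h₁) p, pdv (pdv h₂) p] := by
  funext p
  rw [αvv, αv_eq H₁ H₂]
  refine (fderiv_vec (0, 1) (differentiableAt_const _) (differentiableAt_const _)
    (diff_of_contDiff (contDiff_pdv H₁) p) (diff_of_contDiff (contDiff_pdv H₂) p)).trans ?_
  simp [pdv]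

lemma wedge_chart (p q r s : ℝ) :
    wedge ((WithLp.equiv 2 (Fin 4 → ℝ)).symm ![1, 0, p, r])
      ((WithLp.equiv 2 (Fin 4 → ℝ)).symm ![0, 1, q, s])
      ((WithLp.equiv 2 (Fin 4 → ℝ)).symm ![-p, -q, 1, 0]) =
    (WithLp.equiv 2 (Fin 4 → ℝ)).symm
      ![p * q * s - r * (1 + q * q), p * q * r - s * (1 + p * p),
        -(p * r + q * s), 1 + (p * p + q * q)] := by
  ext i
  fin_cases i <;>
    simp [wedge, Matrix.det_succ_row_zero, Fin.sum_univ_succ, Fin.succAbove] <;> ring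

lemma B2_eq (H₁ : ContDiff ℝ (⊤ : ℕ∞) h₁) (H₂ : ContDiff ℝ (⊤ : ℕ∞) h₂) (p : ℝ × ℝ) :
    B2 h₁ h₂ p = (WithLp.equiv 2 (Fin 4 → ℝ)).symm
      ![pdu h₁ p * pdv h₁ p * pdv h₂ p - pdu h₂ p * (1 + pdv h₁ p * pdv h₁ p),
        pdu h₁ p * pdv h₁ p * pdu h₂ p - pdv h₂ p * (1 + pdu h₁ p * pdu h₁ p),
        -(pdu h₁ p * pdu h₂ p + pdv h₁ p * pdv h₂ p),
        1 + (pdu h₁ p * pdu h₁ p + pdv h₁ p * pdv h₁ p)] := by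
  rw [B2, αu_eq H₁ H₂, αv_eq H₁ H₂, B1]
  exact wedge_chart _ _ _ _

lemma norm_vec (a b c d : ℝ) :
    ‖((WithLp.equiv 2 (Fin 4 → ℝ)).symm ![a, b, c, d] : E4)‖
      = √(a * a + (b * b + (c * c + d * d))) := by
  rw [EuclideanSpace.norm_eq]
  simp [Fin.sum_univ_succ, pow_two]

lemma inner_vec (a b c d a' b' c' d' : ℝ) :
    ⟪((WithLp.equiv 2 (Fin 4 → ℝ)).symm ![a, b, c, d] : E4),
      (WithLp.equiv 2 (Fin 4 → ℝ)).symm ![a', b', c', d']⟫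
      = a * a' + (b * b' + (c * c' + d * d')) := by
  simp [PiLp.inner_apply, Fin.sum_univ_succ, mul_comm]

end Chart

/-! ### The mean curvature components to first order -/

/-- First-order behaviour at the origin of a mean curvature component: the first fundamental form
`E, F, G` and the components `m, n` of the normal are stationary there, with `E = G = n = 1` and
`F = m = 0`, so only the derivatives of `y₁` and `y₃` contribute. Here `xⱼ`, `yⱼ` stand for the
second derivatives of the two height functions. -/
lemma hasFDerivAt_mean {E F G m n x₁ x₂ x₃ y₁ y₂ y₃ : ℝ × ℝ → ℝ}
    (hE : FlatAt E 1) (hF : FlatAt F 0) (hG : FlatAt G 1) (hm : FlatAt m 0) (hn : FlatAt n 1)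
    (hx₁ : DifferentiableAt ℝ x₁ (0, 0)) (hx₂ : DifferentiableAt ℝ x₂ (0, 0))
    (hx₃ : DifferentiableAt ℝ x₃ (0, 0)) (hy₁ : DifferentiableAt ℝ y₁ (0, 0))
    (hy₂ : DifferentiableAt ℝ y₂ (0, 0)) (hy₃ : DifferentiableAt ℝ y₃ (0, 0)) :
    HasFDerivAt (fun p => (G p * (x₁ p * m p + y₁ p * n p)
        - 2 * F p * (x₂ p * m p + y₂ p * n p) + E p * (x₃ p * m p + y₃ p * n p))
        / (2 * (E p * G p - F p ^ 2)))
      ((2⁻¹ : ℝ) • (fderiv ℝ y₁ (0, 0) + fderiv ℝ y₃ (0, 0))) (0, 0) := by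
  have hsec {x y : ℝ × ℝ → ℝ} (hx : DifferentiableAt ℝ x (0, 0))
      (hy : DifferentiableAt ℝ y (0, 0)) :
      HasFDerivAt (fun p => x p * m p + y p * n p) (fderiv ℝ y (0, 0)) (0, 0) := by
    simpa [hm.1, hn.1] using
      (hx.hasFDerivAt.fun_mul hm.2).fun_add (hy.hasFDerivAt.fun_mul hn.2)
  have hnum : HasFDerivAt (fun p => G p * (x₁ p * m p + y₁ p * n p)
      - 2 * F p * (x₂ p * m p + y₂ p * n p) + E p * (x₃ p * m p + y₃ p * n p))
      (fderiv ℝ y₁ (0, 0) + fderiv ℝ y₃ (0, 0)) (0, 0) := by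
    simpa [hE.1, hF.1, hG.1] using
      ((hG.2.fun_mul (hsec hx₁ hy₁)).fun_sub
        ((hF.2.const_mul 2).fun_mul (hsec hx₂ hy₂))).fun_add (hE.2.fun_mul (hsec hx₃ hy₃))
  have hden : HasFDerivAt (fun p => 2 * (E p * G p - F p ^ 2)) (0 : ℝ × ℝ →L[ℝ] ℝ) (0, 0) := by
    simpa [hE.1, hF.1, hG.1, pow_two] using
      ((hE.2.fun_mul hG.2).fun_sub (hF.2.fun_mul hF.2)).const_mul 2
  have hden0 : 2 * (E (0, 0) * G (0, 0) - F (0, 0) ^ 2) = 2 := by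
    simp [hE.1, hF.1, hG.1]
  have hinv := (hasDerivAt_inv (x := 2 * (E (0, 0) * G (0, 0) - F (0, 0) ^ 2))
    (by rw [hden0]; norm_num)).comp_hasFDerivAt (0, 0) hden
  simpa [div_eq_mul_inv, Function.comp_def, hE.1, hF.1, hG.1] using hnum.fun_mul hinv

/-- first partial derivatives of the components of the mean curvature
vector at the origin in the Monge chart. -/
theorem stmt2
    (h₁ h₂ : ℝ × ℝ → ℝ)
    (h₁smooth : ContDiff ℝ (⊤ : ℕ∞) h₁) (h₂smooth : ContDiff ℝ (⊤ : ℕ∞) h₂)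
    (h₁zero : h₁ (0, 0) = 0) (h₂zero : h₂ (0, 0) = 0)
    (h₁grad : fderiv ℝ h₁ (0, 0) = 0) (h₂grad : fderiv ℝ h₂ (0, 0) = 0) :
    pdu (Hc1 h₁ h₂) (0, 0) = (aa h₁ + bb h₁) / 2 ∧
    pdv (Hc1 h₁ h₂) (0, 0) = (cc h₁ + dd h₁) / 2 ∧
    pdu (Hc2 h₁ h₂) (0, 0) = (aa h₂ + bb h₂) / 2 ∧
    pdv (Hc2 h₁ h₂) (0, 0) = (cc h₂ + dd h₂) / 2 := by
  have u₁ := contDiff_pdu h₁smooth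
  have v₁ := contDiff_pdv h₁smooth
  have u₂ := contDiff_pdu h₂smooth
  have v₂ := contDiff_pdv h₂smooth
  have du₁ := diff_of_contDiff u₁ (0, 0)
  have dv₁ := diff_of_contDiff v₁ (0, 0)
  have du₂ := diff_of_contDiff u₂ (0, 0)
  have dv₂ := diff_of_contDiff v₂ (0, 0)
  have zu₁ : pdu h₁ (0, 0) = 0 := by simp [pdu, h₁grad]
  have zv₁ : pdv h₁ (0, 0) = 0 := by simp [pdv, h₁grad]
  have zu₂ : pdu h₂ (0, 0) = 0 := by simp [pdu, h₂grad]
  have zv₂ : pdv h₂ (0, 0) = 0 := by simp [pdv, h₂grad]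
  have duu₁ := diff_of_contDiff (contDiff_pdu u₁) (0, 0)
  have duv₁ := diff_of_contDiff (contDiff_pdv u₁) (0, 0)
  have dvv₁ := diff_of_contDiff (contDiff_pdv v₁) (0, 0)
  have duu₂ := diff_of_contDiff (contDiff_pdu u₂) (0, 0)
  have duv₂ := diff_of_contDiff (contDiff_pdv u₂) (0, 0)
  have dvv₂ := diff_of_contDiff (contDiff_pdv v₂) (0, 0)
  have fuu₁ := FlatAt.mul_of_zero du₁ du₁ zu₁ zu₁
  have fvv₁ := FlatAt.mul_of_zero dv₁ dv₁ zv₁ zv₁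
  have hE : FlatAt (Ec h₁ h₂) 1 := by
    have h := (FlatAt.const 1).add (fuu₁.add (FlatAt.mul_of_zero du₂ du₂ zu₂ zu₂))
    convert h using 1
    · funext p; rw [Ec, αu_eq h₁smooth h₂smooth, inner_vec]; ring
    · norm_num
  have hF : FlatAt (Fc h₁ h₂) 0 := by
    have h := (FlatAt.mul_of_zero du₁ dv₁ zu₁ zv₁).add (FlatAt.mul_of_zero du₂ dv₂ zu₂ zv₂)
    convert h using 1
    · funext p; rw [Fc, αu_eq h₁smooth h₂smooth, αv_eq h₁smooth h₂smooth, inner_vec]; ring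
    · norm_num
  have hG : FlatAt (Gc h₁ h₂) 1 := by
    have h := (FlatAt.const 1).add (fvv₁.add (FlatAt.mul_of_zero dv₂ dv₂ zv₂ zv₂))
    convert h using 1
    · funext p; rw [Gc, αv_eq h₁smooth h₂smooth, inner_vec]; ring
    · norm_num
  have hB1 : FlatAt (fun p => ‖B1 h₁ p‖⁻¹) 1 := by
    have h := (FlatAt.const 1).add (fuu₁.add fvv₁)
    simp only [add_zero] at h
    convert h.inv_sqrt using 1
    funext p
    rw [B1, norm_vec]
    congr 2
    ring
  -- `B₂` is `e₄` at the origin; its third and fourth components are stationary, and its first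
  -- two vanish there, hence enter `|B₂|²` only to second order.
  have B2_vec (p : ℝ × ℝ) := B2_eq h₁smooth h₂smooth p
  have hB3 : FlatAt (fun p => -(pdu h₁ p * pdu h₂ p + pdv h₁ p * pdv h₂ p)) 0 := by
    simpa using ((FlatAt.mul_of_zero du₁ du₂ zu₁ zu₂).add
      (FlatAt.mul_of_zero dv₁ dv₂ zv₁ zv₂)).neg
  have hB4 : FlatAt (fun p => 1 + (pdu h₁ p * pdu h₁ p + pdv h₁ p * pdv h₁ p)) 1 := by
    simpa using (FlatAt.const 1).add (fuu₁.add fvv₁)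
  have hB2 : FlatAt (fun p => ‖B2 h₁ h₂ p‖⁻¹) 1 := by
    have dx : DifferentiableAt ℝ (fun p => pdu h₁ p * pdv h₁ p * pdv h₂ p
        - pdu h₂ p * (1 + pdv h₁ p * pdv h₁ p)) (0, 0) := by fun_prop
    have dy : DifferentiableAt ℝ (fun p => pdu h₁ p * pdv h₁ p * pdu h₂ p
        - pdv h₂ p * (1 + pdu h₁ p * pdu h₁ p)) (0, 0) := by fun_prop
    have h := (FlatAt.mul_of_zero dx dx (by simp [zu₁, zu₂]) (by simp [zu₁, zu₂])).add
      ((FlatAt.mul_of_zero dy dy (by simp [zu₁, zv₂]) (by simp [zu₁, zv₂])).add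
        ((hB3.mul hB3).add (hB4.mul hB4)))
    simp only [mul_zero, mul_one, zero_add] at h
    convert h.inv_sqrt using 1
    funext p
    rw [B2_vec, norm_vec]
  have hn := hB2.mul hB4
  have hm := hB2.mul hB3
  simp only [mul_zero, mul_one] at hn hm
  have D1 : HasFDerivAt (Hc1 h₁ h₂)
      ((2⁻¹ : ℝ) • (fderiv ℝ (pdu (pdu h₁)) (0, 0) + fderiv ℝ (pdv (pdv h₁)) (0, 0))) (0, 0) := by
    convert hasFDerivAt_mean hE hF hG (FlatAt.const 0) hB1 duu₂ duv₂ dvv₂ duu₁ duv₁ dvv₁ using 1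
    funext p
    rw [Hc1, e1, f1, g1, αuu_eq h₁smooth h₂smooth, αuv_eq h₁smooth h₂smooth,
      αvv_eq h₁smooth h₂smooth]
    simp only [N1, inner_smul_right]
    simp only [B1, inner_vec]
    ring
  have D2 : HasFDerivAt (Hc2 h₁ h₂)
      ((2⁻¹ : ℝ) • (fderiv ℝ (pdu (pdu h₂)) (0, 0) + fderiv ℝ (pdv (pdv h₂)) (0, 0))) (0, 0) := by
    convert hasFDerivAt_mean hE hF hG hm hn duu₁ duv₁ dvv₁ duu₂ duv₂ dvv₂ using 1
    funext p
    rw [Hc2, e2, f2, g2, αuu_eq h₁smooth h₂smooth, αuv_eq h₁smooth h₂smooth,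
      αvv_eq h₁smooth h₂smooth]
    simp only [N2, inner_smul_right]
    -- The norm is kept abstract so that only the vector factor `B2` is expanded below.
    generalize ‖B2 h₁ h₂ p‖⁻¹ = k
    simp only [B2_vec, inner_vec]
    ring
  have sym {h : ℝ × ℝ → ℝ} (hs : ContDiff ℝ (⊤ : ℕ∞) h) :
      pdu (pdv (pdv h)) (0, 0) = bb h := by
    rw [pd_comm (contDiff_pdv hs), pd_comm hs, bb]
  have s₁ := sym h₁smooth
  have s₂ := sym h₂smooth
  refine ⟨?_, ?_, ?_, ?_⟩
  · rw [← s₁, pdu, D1.fderiv]; simp [aa, pdu]; ring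
  · rw [pdv, D1.fderiv]; simp [cc, dd, pdv]; ring
  · rw [← s₂, pdu, D2.fderiv]; simp [aa, pdu]; ring
  · rw [pdv, D2.fderiv]; simp [cc, dd, pdv]; ring
end
end

section
/- For all real numbers ā, b̄, c̄, d̄ and every ω ∈ ℝ, there exist real numbers ā₁, b̄₁, c̄₁, d̄₁ such that for all u₁, v₁, du₁, dv₁ ∈ ℝ, Φ(cos ω·u₁ + sin ω·v₁, −sin ω·u₁ + cos ω·v₁, cos ω·du₁ + sin ω·dv₁, −sin ω·du₁ + cos ω·dv₁) = −(d̄₁u₁ + b̄₁v₁)dv₁² + (ā₁u₁ + c̄₁v₁)du₁dv₁ + (d̄₁u₁ + b̄₁v₁)du₁², where d̄₁ = b̄ sin³ω + (c̄ − d̄) sin²ω cos ω − (ā + b̄) sin ω cos²ω + d̄ cos³ω. Moreover, for any ā, b̄, c̄, d̄ there exists ω ∈ ℝ for which d̄₁ = 0. -/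
noncomputable section

open Real

/-- The linearized model `Φ(u,v,du,dv) = −(d̄u + b̄v)dv² + (āu + c̄v)du·dv + (d̄u + b̄v)du²`
at a singularity of the quadratic differential equation of principal mean curvature lines. -/
def Phi (ab bb cb db : ℝ) (u v du dv : ℝ) : ℝ :=
  -(db * u + bb * v) * dv ^ 2 + (ab * u + cb * v) * du * dv + (db * u + bb * v) * du ^ 2

/-- rotating the chart by an angle `ω` transforms the model equation into one
of the same form, with `d̄₁ = b̄ sin³ω + (c̄ − d̄) sin²ω cos ω − (ā + b̄) sin ω cos²ω + d̄ cos³ω`;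
moreover some rotation makes `d̄₁ = 0`. -/
theorem stmt8 (ab bb cb db : ℝ) :
    (∀ ω : ℝ, ∃ ab₁ bb₁ cb₁ db₁ : ℝ,
      (∀ u₁ v₁ du₁ dv₁ : ℝ,
        Phi ab bb cb db (cos ω * u₁ + sin ω * v₁) (-sin ω * u₁ + cos ω * v₁)
            (cos ω * du₁ + sin ω * dv₁) (-sin ω * du₁ + cos ω * dv₁) =
          -(db₁ * u₁ + bb₁ * v₁) * dv₁ ^ 2 + (ab₁ * u₁ + cb₁ * v₁) * du₁ * dv₁ +
            (db₁ * u₁ + bb₁ * v₁) * du₁ ^ 2) ∧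
      db₁ = bb * sin ω ^ 3 + (cb - db) * sin ω ^ 2 * cos ω -
            (ab + bb) * sin ω * cos ω ^ 2 + db * cos ω ^ 3) ∧
    (∃ ω : ℝ, bb * sin ω ^ 3 + (cb - db) * sin ω ^ 2 * cos ω -
        (ab + bb) * sin ω * cos ω ^ 2 + db * cos ω ^ 3 = 0) := by
  refine ⟨fun ω => ?_, ?_⟩
  · -- With `B = d̄u + b̄v` and `A = āu + c̄v`, the model is `B(du² - dv²) + A du dv`. The rotation
    -- replaces `B` by `B(cos²ω - sin²ω) - A sin ω cos ω` and `A` by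
    -- `4B sin ω cos ω + A(cos²ω - sin²ω)`; the witnesses are their coefficients in `u₁` and `v₁`.
    refine ⟨4 * (sin ω * cos ω) * (db * cos ω - bb * sin ω) +
          (cos ω ^ 2 - sin ω ^ 2) * (ab * cos ω - cb * sin ω),
        (cos ω ^ 2 - sin ω ^ 2) * (db * sin ω + bb * cos ω) -
          sin ω * cos ω * (ab * sin ω + cb * cos ω),
        4 * (sin ω * cos ω) * (db * sin ω + bb * cos ω) +
          (cos ω ^ 2 - sin ω ^ 2) * (ab * sin ω + cb * cos ω),
        _, fun u₁ v₁ du₁ dv₁ => ?_, rfl⟩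
    unfold Phi
    ring
  · -- The expression is an odd form in `(cos ω, sin ω)`, so it takes the opposite values `d̄` and
    -- `-d̄` at `0` and `π`; it vanishes somewhere by the intermediate value theorem.
    let f : ℝ → ℝ := fun ω => bb * sin ω ^ 3 + (cb - db) * sin ω ^ 2 * cos ω -
      (ab + bb) * sin ω * cos ω ^ 2 + db * cos ω ^ 3
    have hf : Continuous f := by fun_prop
    have h0 : f 0 = db := by simp [f]
    have hpi : f π = -db := by simp [f]; ring
    rcases le_total db 0 with h | h
    · exact mem_range_of_exists_le_of_exists_ge hf ⟨0, by linarith⟩ ⟨π, by linarith⟩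
    · exact mem_range_of_exists_le_of_exists_ge hf ⟨π, by linarith⟩ ⟨0, by linarith⟩
end
end
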